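/- Let K = C_{(11,2)}(4₁) be the (11,2)-cable of the figure-eight knot, with normalized colored Jones polynomial J_{K,n} defined via Habiro's formula and the cabling formula (with r = 11, s = 2). For every integer n ≥ 1, the function ℏ ↦ J_{K,n}(e^{ℏ}) (defined for small real ℏ ≠ 0 by the quotient J̃_{K,n}(e^{ℏ/4})/J̃_{U,n}(e^{ℏ/4}) and extended real-analytically across ℏ = 0) has Taylor expansion at ℏ = 0 equal to J_{K,n}(e^{ℏ}) = 1 + (11 − 11n²)ℏ² + (−88 + 88n²)ℏ³ + (11891/12 − 1137n² + (1753/12)n⁴)ℏ⁴ + (−12826 + (47036/3)n² − (8558/3)n⁴)ℏ⁵ + (69672971/360 − (991683/4)n² + (224545/4)n⁴ − (630551/360)n⁶)ℏ⁶ + O(ℏ⁷). In particular, the coefficient of ℏ and every ℏ-coefficient up to order 6 is a polynomial in n of degree at most the order of ℏ. -/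

import Mathlib

/-- Habiro's formula for the normalized colored Jones polynomial of the figure-eight knot:
`J_{4₁,m}(q) = Σ_{k=0}^{|m|−1} Π_{j=1}^{k} (q^m + q^{−m} − q^j − q^{−j})`. -/
noncomputable def J41 (q : ℝ) (m : ℤ) : ℝ :=
  ∑ k ∈ Finset.range m.natAbs, ∏ j ∈ Finset.Icc 1 k,
    (q ^ m + q ^ (-m) - q ^ (j : ℤ) - q ^ (-(j : ℤ)))

/-- The unnormalized colored Jones polynomial of the figure-eight knot (with `t⁴ = q`):
`J̃_{4₁,m}(t) = ((t^{2m} − t^{−2m})/(t² − t^{−2})) · J_{4₁,m}(t⁴)`. -/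
noncomputable def Jtilde41 (t : ℝ) (m : ℤ) : ℝ :=
  (t ^ (2 * m) - t ^ (-(2 * m))) / (t ^ (2 : ℤ) - t ^ (-2 : ℤ)) * J41 (t ^ (4 : ℤ)) m

/-- The 0-framed unknot normalization `J̃_{U,n}(t) = (t^{2n} − t^{−2n})/(t² − t^{−2})`. -/
noncomputable def JtildeU (t : ℝ) (n : ℤ) : ℝ :=
  (t ^ (2 * n) - t ^ (-(2 * n))) / (t ^ (2 : ℤ) - t ^ (-2 : ℤ))

/-- The cabling formula for the unnormalized colored Jones polynomial of the
`(r,s)`-cable of the figure-eight knot: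
`J̃_{K,n}(t) = t^{−rs(n²−1)} Σ_w t^{4rw(sw+1)} J̃_{4₁,2sw+1}(t)`, where `w` runs over
`{−(n−1)/2, −(n−1)/2 + 1, …, (n−1)/2}`.  Writing `u = 2w = 2j − (n−1)` for `j = 0, …, n−1`,
the exponent is `4rw(sw+1) = rsu² + 2ru` and the color is `2sw + 1 = su + 1`. -/
noncomputable def JtildeCable (r s : ℤ) (t : ℝ) (n : ℤ) : ℝ :=
  t ^ (-(r * s * (n ^ 2 - 1))) *
    ∑ j ∈ Finset.range n.toNat,
      t ^ (r * s * (2 * (j : ℤ) - (n - 1)) ^ 2 + 2 * r * (2 * (j : ℤ) - (n - 1))) *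
        Jtilde41 t (s * (2 * (j : ℤ) - (n - 1)) + 1)

/-- The normalized colored Jones polynomial of the `(r,s)`-cable of the figure-eight knot,
evaluated at `q = e^ℏ` (that is, `t = e^{ℏ/4}`):
`J_{K,n}(e^ℏ) = J̃_{K,n}(e^{ℏ/4}) / J̃_{U,n}(e^{ℏ/4})`. -/
noncomputable def JCable (r s : ℤ) (n : ℤ) (h : ℝ) : ℝ :=
  JtildeCable r s (Real.exp (h / 4)) n / JtildeU (Real.exp (h / 4)) n

/-!
After cancelling `1 / (t ^ 2 - t ^ (-2))`, the colored Jones polynomial of the cable is a quotient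
whose denominator vanishes to first order at `ℏ = 0`, so its expansion modulo `ℏ ^ 7` amounts to a
congruence `numerator ≡ denominator * expansion` of formal power series modulo `ℏ ^ 8`. Each factor
in Habiro's formula is divisible by `ℏ ^ 2`, so modulo `ℏ ^ 8` four terms suffice for every color,
and their coefficients are polynomials in the color. Passing from color `n` to `n + 2` adds
exactly the two terms `w = ±(n + 1) / 2` to the cabling formula. Induction therefore reduces the
congruence to a polynomial identity in `n` for each power of `ℏ`.
-/

open Asymptotics Filter Finset PowerSeries Topology

section Analytic

variable {𝕜 : Type*} [NontriviallyNormedField 𝕜]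

theorem exists_analyticAt_eq_div_isBigO_sub {f g t : 𝕜 → 𝕜} {z₀ : 𝕜} {m d : ℕ}
    (hf : AnalyticAt 𝕜 f z₀) (hg : AnalyticAt 𝕜 g z₀) (ht : AnalyticAt 𝕜 t z₀)
    (hgm : analyticOrderAt g z₀ = m)
    (hfgt : (m + d : ℕ) ≤ analyticOrderAt (fun z => f z - g z * t z) z₀) :
    ∃ q : 𝕜 → 𝕜, AnalyticAt 𝕜 q z₀ ∧ (∀ᶠ z in 𝓝[≠] z₀, q z = f z / g z) ∧
      (fun z => q z - t z) =O[𝓝 z₀] fun z => (z - z₀) ^ d := by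
  obtain ⟨u, hu, hu₀, hgu⟩ := hg.analyticOrderAt_eq_natCast.mp hgm
  obtain ⟨v, hv, hfv⟩ := (natCast_le_analyticOrderAt (by fun_prop)).mp hfgt
  have hvu : AnalyticAt 𝕜 (fun z => v z / u z) z₀ := hv.div hu hu₀
  refine ⟨fun z => t z + (z - z₀) ^ d * (v z / u z), by fun_prop, ?_, ?_⟩
  · filter_upwards [hgu.filter_mono nhdsWithin_le_nhds, hfv.filter_mono nhdsWithin_le_nhds,
      (hu.continuousAt.eventually_ne hu₀).filter_mono nhdsWithin_le_nhds, self_mem_nhdsWithin]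
      with z hgz hfz huz hz
    have hz : z - z₀ ≠ 0 := sub_ne_zero.mpr hz
    simp only [smul_eq_mul] at hgz hfz
    rw [sub_eq_iff_eq_add.mp hfz, hgz]
    field_simp
    ring
  · simpa using (isBigO_refl (fun z => (z - z₀) ^ d) (𝓝 z₀)).mul
      (hvu.continuousAt.isBigO_one 𝕜)

/-- The function `f` is analytic at `0` and its Taylor series there is `p`. -/
structure HasMaclaurinSeries (f : 𝕜 → 𝕜) (p : 𝕜⟦X⟧) : Prop where
  analyticAt : AnalyticAt 𝕜 f 0
  iteratedDeriv_eq : ∀ n : ℕ, iteratedDeriv n f 0 = n.factorial * coeff n p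

namespace HasMaclaurinSeries

variable {f g : 𝕜 → 𝕜} {p q : 𝕜⟦X⟧}

theorem const (c : 𝕜) : HasMaclaurinSeries (fun _ => c) (C c) where
  analyticAt := analyticAt_const
  iteratedDeriv_eq n := by
    rcases eq_or_ne n 0 with rfl | hn <;> simp [iteratedDeriv_const, coeff_C, *]

theorem id : HasMaclaurinSeries (fun z : 𝕜 => z) X where
  analyticAt := analyticAt_id
  iteratedDeriv_eq n := by
    rcases n with _ | _ | n <;> simp [iteratedDeriv_succ', iteratedDeriv_const, coeff_X]

variable [CompleteSpace 𝕜]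

theorem add (hf : HasMaclaurinSeries f p) (hg : HasMaclaurinSeries g q) :
    HasMaclaurinSeries (fun z => f z + g z) (p + q) where
  analyticAt := hf.analyticAt.fun_add hg.analyticAt
  iteratedDeriv_eq n := by
    rw [iteratedDeriv_fun_add hf.analyticAt.contDiffAt hg.analyticAt.contDiffAt,
      hf.iteratedDeriv_eq, hg.iteratedDeriv_eq, map_add, mul_add]

theorem sub (hf : HasMaclaurinSeries f p) (hg : HasMaclaurinSeries g q) :
    HasMaclaurinSeries (fun z => f z - g z) (p - q) where
  analyticAt := hf.analyticAt.fun_sub hg.analyticAt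
  iteratedDeriv_eq n := by
    rw [iteratedDeriv_fun_sub hf.analyticAt.contDiffAt hg.analyticAt.contDiffAt,
      hf.iteratedDeriv_eq, hg.iteratedDeriv_eq, map_sub, mul_sub]

theorem mul (hf : HasMaclaurinSeries f p) (hg : HasMaclaurinSeries g q) :
    HasMaclaurinSeries (fun z => f z * g z) (p * q) where
  analyticAt := hf.analyticAt.fun_mul hg.analyticAt
  iteratedDeriv_eq n := by
    rw [iteratedDeriv_fun_mul hf.analyticAt.contDiffAt hg.analyticAt.contDiffAt, coeff_mul,
      Nat.sum_antidiagonal_eq_sum_range_succ_mk, mul_sum]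
    refine sum_congr rfl fun i hi => ?_
    rw [hf.iteratedDeriv_eq, hg.iteratedDeriv_eq,
      ← Nat.choose_mul_factorial_mul_factorial (mem_range_succ_iff.mp hi)]
    push_cast
    ring

theorem sum {ι : Type*} {s : Finset ι} {f : ι → 𝕜 → 𝕜} {p : ι → 𝕜⟦X⟧}
    (hf : ∀ i ∈ s, HasMaclaurinSeries (f i) (p i)) :
    HasMaclaurinSeries (fun z => ∑ i ∈ s, f i z) (∑ i ∈ s, p i) := by
  classical
  induction s using Finset.induction_on with
  | empty => simpa using const (0 : 𝕜)
  | insert i s hi ih =>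
    simp only [sum_insert hi]
    exact (hf i (mem_insert_self i s)).add (ih fun j hj => hf j (mem_insert_of_mem hj))

theorem prod {ι : Type*} {s : Finset ι} {f : ι → 𝕜 → 𝕜} {p : ι → 𝕜⟦X⟧}
    (hf : ∀ i ∈ s, HasMaclaurinSeries (f i) (p i)) :
    HasMaclaurinSeries (fun z => ∏ i ∈ s, f i z) (∏ i ∈ s, p i) := by
  classical
  induction s using Finset.induction_on with
  | empty => simpa using const (1 : 𝕜)
  | insert i s hi ih =>
    simp only [prod_insert hi]
    exact (hf i (mem_insert_self i s)).mul (ih fun j hj => hf j (mem_insert_of_mem hj))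

theorem polynomial (P : Polynomial 𝕜) :
    HasMaclaurinSeries (fun z => P.eval z) (P : 𝕜⟦X⟧) := by
  induction P using Polynomial.induction_on with
  | C a => simpa using const a
  | add P Q hP hQ => simpa using hP.add hQ
  | monomial n a ih => simpa [pow_succ, mul_assoc] using ih.mul id

theorem analyticOrderAt_eq_order [CharZero 𝕜] (hf : HasMaclaurinSeries f p) :
    analyticOrderAt f 0 = p.order := by
  refine ENat.eq_of_forall_natCast_le_iff fun n => ?_
  rw [natCast_le_analyticOrderAt_iff_iteratedDeriv_eq_zero hf.analyticAt]
  simp only [hf.iteratedDeriv_eq, mul_eq_zero, Nat.cast_eq_zero, Nat.factorial_ne_zero, false_or]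
  exact ⟨nat_le_order p n,
    fun h i hi => coeff_of_lt_order i ((Nat.cast_lt.mpr hi).trans_le h)⟩

theorem exists_analyticAt_eq_div_isBigO_sub_trunc [CharZero 𝕜] {r : 𝕜⟦X⟧} {m d : ℕ}
    (hf : HasMaclaurinSeries f p) (hg : HasMaclaurinSeries g q) (hq : q.order = m)
    (hr : X ^ (m + d) ∣ p - q * r) :
    ∃ φ : 𝕜 → 𝕜, AnalyticAt 𝕜 φ 0 ∧ (∀ᶠ z in 𝓝[≠] 0, φ z = f z / g z) ∧
      (fun z => φ z - (trunc d r).eval z) =O[𝓝 0] fun z => z ^ d := by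
  have ht := polynomial (trunc d r)
  have hqm : X ^ m ∣ q := by simpa [hq] using X_pow_order_dvd (φ := q)
  have hrd : X ^ d ∣ r - (trunc d r : 𝕜⟦X⟧) :=
    X_pow_dvd_iff.mpr fun k hk => by simp [coeff_trunc, hk]
  have hdvd : X ^ (m + d) ∣ p - q * (trunc d r : 𝕜⟦X⟧) := by
    convert hr.add (pow_add (X : 𝕜⟦X⟧) m d ▸ mul_dvd_mul hqm hrd) using 1
    ring
  simpa using exists_analyticAt_eq_div_isBigO_sub hf.analyticAt hg.analyticAt ht.analyticAt
    (hg.analyticOrderAt_eq_order.trans hq) <|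
    (nat_le_order _ _ (X_pow_dvd_iff.mp hdvd)).trans_eq
      (hf.sub (hg.mul ht)).analyticOrderAt_eq_order.symm

end HasMaclaurinSeries

end Analytic

theorem sum_range_arith_add_two {M : Type*} [AddCommMonoid M] (f : ℤ → M) (N : ℕ) :
    ∑ j ∈ range (N + 2), f (2 * j - ((N + 2 : ℕ) - 1)) =
      ∑ j ∈ range N, f (2 * j - (N - 1)) + (f (N + 1) + f (-(N + 1))) := by
  rw [sum_range_succ, sum_range_succ', add_assoc, add_comm (f _)]
  refine congrArg₂ _ (sum_congr rfl fun j _ => congrArg f ?_)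
    (congrArg₂ _ (congrArg f ?_) (congrArg f ?_)) <;> push_cast <;> ring

theorem dvd_sum_range_arith_sub {R : Type*} [CommRing R] {a : R} {f : ℤ → R} {G : ℕ → R}
    (h₀ : a ∣ G 0) (h₁ : a ∣ f 0 - G 1)
    (h : ∀ N : ℕ, a ∣ f (N + 1) + f (-(N + 1)) - (G (N + 2) - G N)) (N : ℕ) :
    a ∣ ∑ j ∈ range N, f (2 * j - (N - 1)) - G N := by
  induction N using Nat.twoStepInduction with
  | zero => simpa using h₀
  | one => simpa using h₁
  | more N ih _ =>
    rw [sum_range_arith_add_two]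
    convert ih.add (h N) using 1
    ring

section ExpSeries

/-- The expansion of `q ^ c = e ^ (c ℏ)` in powers of `ℏ`. -/
noncomputable def expSeries (c : ℝ) : ℝ⟦X⟧ :=
  rescale c (PowerSeries.exp ℝ)

theorem coeff_expSeries (c : ℝ) (k : ℕ) : coeff k (expSeries c) = c ^ k / k.factorial := by
  simp [expSeries, coeff_exp, div_eq_mul_inv]

theorem expSeries_add (a b : ℝ) : expSeries (a + b) = expSeries a * expSeries b :=
  (exp_mul_exp_eq_exp_add a b).symm

theorem hasMaclaurinSeries_exp_mul (c : ℝ) :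
    HasMaclaurinSeries (fun h => Real.exp (c * h)) (expSeries c) where
  analyticAt := by fun_prop
  iteratedDeriv_eq n := by
    rw [iteratedDeriv_exp_const_mul, coeff_expSeries]
    simp only [mul_zero, Real.exp_zero, mul_one]
    field_simp

theorem hasMaclaurinSeries_exp_div_four_zpow (k : ℤ) :
    HasMaclaurinSeries (fun h => Real.exp (h / 4) ^ k) (expSeries (k / 4)) := by
  convert hasMaclaurinSeries_exp_mul (k / 4) using 2 with h
  rw [← Real.rpow_intCast, ← Real.exp_mul]
  ring_nf

/-- The expansion of `q ^ a * (q ^ (x / 2) - q ^ (-x / 2))` in powers of `ℏ`. -/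
noncomputable def bracketSeries (a x : ℝ) : ℝ⟦X⟧ :=
  expSeries (a + x / 2) - expSeries (a - x / 2)

theorem coeff_bracketSeries (a x : ℝ) (k : ℕ) :
    coeff k (bracketSeries a x) = ((a + x / 2) ^ k - (a - x / 2) ^ k) / k.factorial := by
  rw [bracketSeries, map_sub, coeff_expSeries, coeff_expSeries, sub_div]

theorem expSeries_mul_bracketSeries (a b x : ℝ) :
    expSeries a * bracketSeries b x = bracketSeries (a + b) x := by
  rw [bracketSeries, bracketSeries, mul_sub, ← expSeries_add, ← expSeries_add, add_assoc,
    add_sub_assoc]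

theorem bracketSeries_zero_right (a : ℝ) : bracketSeries a 0 = 0 := by
  simp [bracketSeries]

theorem order_bracketSeries (a : ℝ) {x : ℝ} (hx : x ≠ 0) : (bracketSeries a x).order = 1 := by
  refine order_eq_nat.mpr ⟨by simpa [coeff_bracketSeries], fun i hi => ?_⟩
  simp [coeff_bracketSeries, Nat.lt_one_iff.mp hi]

theorem hasMaclaurinSeries_zpow_mul_zpow_sub_zpow (k m : ℤ) :
    HasMaclaurinSeries
      (fun h => Real.exp (h / 4) ^ k *
        (Real.exp (h / 4) ^ (2 * m) - Real.exp (h / 4) ^ (-(2 * m))))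
      (bracketSeries (k / 4) m) := by
  convert (hasMaclaurinSeries_exp_div_four_zpow k).mul
    ((hasMaclaurinSeries_exp_div_four_zpow (2 * m)).sub
      (hasMaclaurinSeries_exp_div_four_zpow (-(2 * m)))) using 1
  rw [bracketSeries, mul_sub, ← expSeries_add, ← expSeries_add]
  push_cast
  ring_nf

end ExpSeries

section FigureEight

/-- The expansion of `q ^ x + q ^ (-x) - q ^ y - q ^ (-y)` in powers of `ℏ`. -/
noncomputable def habiroFactor (x y : ℝ) : ℝ⟦X⟧ :=
  expSeries x + expSeries (-x) - expSeries y - expSeries (-y)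

/-- The expansion in powers of `ℏ` of the first `d` terms of Habiro's sum. The color `x` is allowed
to be any real number; for an integer color `m ≠ 0` all terms from the `|m|`-th on vanish. -/
noncomputable def habiroSum (x : ℝ) (d : ℕ) : ℝ⟦X⟧ :=
  ∑ k ∈ range d, ∏ j ∈ Icc 1 k, habiroFactor x j

theorem coeff_habiroFactor (x y : ℝ) (k : ℕ) :
    coeff k (habiroFactor x y) = (x ^ k + (-x) ^ k - y ^ k - (-y) ^ k) / k.factorial := by
  simp only [habiroFactor, map_sub, map_add, coeff_expSeries]
  ring

theorem X_sq_dvd_habiroFactor (x y : ℝ) : X ^ 2 ∣ habiroFactor x y := by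
  refine X_pow_dvd_iff.mpr fun k hk => ?_
  interval_cases k <;> simp [coeff_habiroFactor]

theorem X_pow_dvd_prod_habiroFactor (x : ℝ) (k : ℕ) :
    X ^ (2 * k) ∣ ∏ j ∈ Icc 1 k, habiroFactor x j := by
  simpa [pow_mul] using
    prod_dvd_prod_of_dvd (fun _ => X ^ 2) _ fun j (_ : j ∈ Icc 1 k) => X_sq_dvd_habiroFactor x j

theorem prod_habiroFactor_eq_zero {m : ℤ} (hm : m ≠ 0) {k : ℕ} (hk : m.natAbs ≤ k) :
    ∏ j ∈ Icc 1 k, habiroFactor m j = 0 := by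
  refine prod_eq_zero (mem_Icc.mpr ⟨Int.natAbs_pos.mpr hm, hk⟩) ?_
  rw [Nat.cast_natAbs, Int.cast_abs, habiroFactor]
  rcases abs_choice (m : ℝ) with h | h <;> rw [h] <;> ring_nf

theorem X_pow_dvd_habiroSum_natAbs_sub {m : ℤ} (hm : m ≠ 0) (d : ℕ) :
    X ^ (2 * d) ∣ habiroSum m m.natAbs - habiroSum m d := by
  rcases le_total d m.natAbs with h | h
  · rw [habiroSum, habiroSum, ← sum_Ico_eq_sub _ h]
    exact dvd_sum fun k hk =>
      (pow_dvd_pow X (by grind)).trans (X_pow_dvd_prod_habiroFactor _ k)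
  · rw [habiroSum, habiroSum, ← neg_sub, ← sum_Ico_eq_sub _ h,
      sum_eq_zero fun k hk => prod_habiroFactor_eq_zero hm (mem_Ico.mp hk).1]
    simp

/-- The `ℏ`-coefficients, up to order 7, of the colored Jones polynomial of the figure-eight knot
in color `x`, continued by zeros. -/
noncomputable def figureEightCoeff (x : ℝ) : ℕ → ℝ
  | 0 => 1
  | 2 => x ^ 2 - 1
  | 4 => (x ^ 2 - 1) * (13 * x ^ 2 - 47) / 12
  | 6 => (x ^ 2 - 1) * (421 * x ^ 4 - 4769 * x ^ 2 + 12361) / 360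
  | _ => 0

theorem X_pow_eight_dvd_habiroSum_four_sub (x : ℝ) :
    X ^ 8 ∣ habiroSum x 4 - PowerSeries.mk (figureEightCoeff x) := by
  have habiroSum_four : habiroSum x 4 = 1 + habiroFactor x 1 +
      habiroFactor x 1 * habiroFactor x 2 +
      habiroFactor x 1 * habiroFactor x 2 * habiroFactor x 3 := by
    simp [habiroSum, sum_range_succ, prod_Icc_succ_top]
  refine X_pow_dvd_iff.mpr fun k hk => ?_
  simp only [habiroSum_four, map_add, map_sub, coeff_mul, coeff_habiroFactor, coeff_one, coeff_mk,
    Nat.sum_antidiagonal_eq_sum_range_succ_mk]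
  interval_cases k <;>
    simp only [sum_range_succ, sum_range_zero, figureEightCoeff, Nat.factorial] <;>
    push_cast <;> ring

theorem X_pow_eight_dvd_habiroSum_natAbs_sub {m : ℤ} (hm : m ≠ 0) :
    X ^ 8 ∣ habiroSum m m.natAbs - PowerSeries.mk (figureEightCoeff m) := by
  simpa using (X_pow_dvd_habiroSum_natAbs_sub hm 4).add (X_pow_eight_dvd_habiroSum_four_sub m)

theorem hasMaclaurinSeries_J41 (m : ℤ) :
    HasMaclaurinSeries (fun h => J41 (Real.exp (h / 4) ^ (4 : ℤ)) m)
      (habiroSum m m.natAbs) := by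
  have hasMaclaurinSeries_zpow (k : ℤ) :
      HasMaclaurinSeries (fun h => (Real.exp (h / 4) ^ (4 : ℤ)) ^ k) (expSeries k) := by
    simpa [zpow_mul] using hasMaclaurinSeries_exp_div_four_zpow (4 * k)
  refine .sum fun k _ => .prod fun j _ => ?_
  simpa [habiroFactor] using (((hasMaclaurinSeries_zpow m).add (hasMaclaurinSeries_zpow (-m))).sub
    (hasMaclaurinSeries_zpow j)).sub (hasMaclaurinSeries_zpow (-j))

end FigureEight

section Cable

/-- The summand with index `u = 2w` of the cabling formula, multiplied by `t ^ 2 - t ^ (-2)`. -/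
noncomputable def cableTerm (r s u : ℤ) (t : ℝ) : ℝ :=
  t ^ (r * s * u ^ 2 + 2 * r * u) * (t ^ (2 * (s * u + 1)) - t ^ (-(2 * (s * u + 1)))) *
    J41 (t ^ (4 : ℤ)) (s * u + 1)

/-- The product of the unknot normalization with the inverse of the framing factor of the cabling
formula, multiplied by `t ^ 2 - t ^ (-2)`. -/
noncomputable def cableDenominator (r s n : ℤ) (t : ℝ) : ℝ :=
  t ^ (r * s * (n ^ 2 - 1)) * (t ^ (2 * n) - t ^ (-(2 * n)))

theorem JtildeCable_div_JtildeU {t : ℝ} (ht : 0 < t) (ht₁ : t ≠ 1) (r s n : ℤ) :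
    JtildeCable r s t n / JtildeU t n =
      (∑ j ∈ range n.toNat, cableTerm r s (2 * j - (n - 1)) t) / cableDenominator r s n t := by
  have hbr : t ^ (2 : ℤ) - t ^ (-2 : ℤ) ≠ 0 :=
    sub_ne_zero.mpr ((zpow_right_injective₀ ht ht₁).ne (by decide))
  simp only [JtildeCable, JtildeU, Jtilde41, cableTerm, cableDenominator, div_mul_eq_mul_div,
    mul_div_assoc', ← sum_div, zpow_neg _ (r * s * _), div_div_div_cancel_right₀ hbr]
  rw [inv_mul_eq_div, div_div]
  simp only [mul_assoc]

/-- The expansion of `cableTerm r s u (e ^ (ℏ / 4))` in powers of `ℏ`. -/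
noncomputable def cableTermSeries (r s u : ℤ) : ℝ⟦X⟧ :=
  bracketSeries ((r * s * u ^ 2 + 2 * r * u : ℤ) / 4) (s * u + 1 : ℤ) *
    habiroSum (s * u + 1 : ℤ) (s * u + 1).natAbs

/-- The expansion of `cableDenominator r s n (e ^ (ℏ / 4))` in powers of `ℏ`. -/
noncomputable def cableDenominatorSeries (r s n : ℤ) : ℝ⟦X⟧ :=
  bracketSeries ((r * s * (n ^ 2 - 1) : ℤ) / 4) n

theorem hasMaclaurinSeries_cableTerm (r s u : ℤ) :
    HasMaclaurinSeries (fun h => cableTerm r s u (Real.exp (h / 4))) (cableTermSeries r s u) :=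
  (hasMaclaurinSeries_zpow_mul_zpow_sub_zpow _ _).mul (hasMaclaurinSeries_J41 _)

theorem hasMaclaurinSeries_cableDenominator (r s n : ℤ) :
    HasMaclaurinSeries (fun h => cableDenominator r s n (Real.exp (h / 4)))
      (cableDenominatorSeries r s n) :=
  hasMaclaurinSeries_zpow_mul_zpow_sub_zpow _ n

/-- The `ℏ`-coefficients, up to order 6, of the colored Jones polynomial of the `(11, 2)`-cable in
color `x`, continued by zeros. -/
noncomputable def cableCoeff (x : ℝ) : ℕ → ℝ
  | 0 => 1
  | 2 => 11 - 11 * x ^ 2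
  | 3 => -88 + 88 * x ^ 2
  | 4 => 11891 / 12 - 1137 * x ^ 2 + 1753 / 12 * x ^ 4
  | 5 => -12826 + 47036 / 3 * x ^ 2 - 8558 / 3 * x ^ 4
  | 6 => 69672971 / 360 - 991683 / 4 * x ^ 2 + 224545 / 4 * x ^ 4 - 630551 / 360 * x ^ 6
  | _ => 0

-- With `x = n + 1`, this is the step from color `n` to `n + 2` after division by `q ^ (11 x² / 2)`.
theorem X_pow_eight_dvd_cable_recursion (x : ℝ) :
    X ^ 8 ∣
      bracketSeries (11 / 2 * x) (2 * x + 1) * PowerSeries.mk (figureEightCoeff (2 * x + 1)) +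
        bracketSeries (-(11 / 2 * x)) (2 * -x + 1) *
          PowerSeries.mk (figureEightCoeff (2 * -x + 1)) -
      (bracketSeries (11 * x) (x + 1) * PowerSeries.mk (cableCoeff (x + 1)) -
        bracketSeries (-(11 * x)) (x - 1) * PowerSeries.mk (cableCoeff (x - 1))) := by
  refine X_pow_dvd_iff.mpr fun k hk => ?_
  simp only [map_add, map_sub, coeff_mul, coeff_mk, coeff_bracketSeries,
    Nat.sum_antidiagonal_eq_sum_range_succ_mk]
  interval_cases k <;>
    simp only [sum_range_succ, sum_range_zero, figureEightCoeff, cableCoeff, Nat.factorial] <;>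
    push_cast <;> ring

theorem X_pow_eight_dvd_cableTermSeries_sub (u : ℤ) :
    X ^ 8 ∣ cableTermSeries 11 2 u - expSeries (11 / 2 * u ^ 2) *
      (bracketSeries (11 / 2 * u) (2 * u + 1) * PowerSeries.mk (figureEightCoeff (2 * u + 1))) := by
  have h := X_pow_eight_dvd_habiroSum_natAbs_sub (m := 2 * u + 1) (by lia)
  convert h.mul_left (bracketSeries (11 / 2 * u ^ 2 + 11 / 2 * u) (2 * u + 1)) using 1
  rw [← mul_assoc, expSeries_mul_bracketSeries, mul_sub, cableTermSeries]
  push_cast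
  ring_nf

theorem X_pow_eight_dvd_sum_cableTermSeries_sub (N : ℕ) :
    X ^ 8 ∣ ∑ j ∈ range N, cableTermSeries 11 2 (2 * j - (N - 1)) -
      cableDenominatorSeries 11 2 N * PowerSeries.mk (cableCoeff N) := by
  refine dvd_sum_range_arith_sub (f := cableTermSeries 11 2)
    (G := fun N => cableDenominatorSeries 11 2 N * PowerSeries.mk (cableCoeff N))
    ?_ ?_ (fun N => ?_) N
  · simp [cableDenominatorSeries, bracketSeries_zero_right]
  · have hone : X ^ 8 ∣ 1 - PowerSeries.mk (cableCoeff 1) := X_pow_dvd_iff.mpr fun k hk => by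
      interval_cases k <;> norm_num [cableCoeff, coeff_one]
    simpa [cableTermSeries, cableDenominatorSeries, habiroSum, mul_sub] using
      hone.mul_left (bracketSeries 0 1)
  · have hrec := (X_pow_eight_dvd_cable_recursion (N + 1)).mul_left
      (expSeries (11 / 2 * (N + 1) ^ 2))
    have hterm := (X_pow_eight_dvd_cableTermSeries_sub (N + 1)).add
      (X_pow_eight_dvd_cableTermSeries_sub (-(N + 1)))
    convert hrec.add hterm using 1
    simp only [cableDenominatorSeries, mul_add, mul_sub, ← mul_assoc, expSeries_mul_bracketSeries]
    push_cast
    ring_nf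

end Cable

/-- For `K = C_{(11,2)}(4₁)` and every integer `n ≥ 1`, the function `ℏ ↦ J_{K,n}(e^ℏ)`
(defined for small `ℏ ≠ 0` by the quotient `J̃_{K,n}(e^{ℏ/4})/J̃_{U,n}(e^{ℏ/4})` and extended
real-analytically across `ℏ = 0`) has Taylor expansion at `ℏ = 0` given by
`1 + (11 − 11n²)ℏ² + (−88 + 88n²)ℏ³ + (11891/12 − 1137n² + (1753/12)n⁴)ℏ⁴
 + (−12826 + (47036/3)n² − (8558/3)n⁴)ℏ⁵
 + (69672971/360 − (991683/4)n² + (224545/4)n⁴ − (630551/360)n⁶)ℏ⁶ + O(ℏ⁷)`. -/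
theorem hbar_expansion_cable_11_2 (n : ℤ) (hn : 1 ≤ n) :
    ∃ g : ℝ → ℝ, AnalyticAt ℝ g 0 ∧
      (∀ᶠ h in nhdsWithin (0 : ℝ) {0}ᶜ, g h = JCable 11 2 n h) ∧
      (fun h : ℝ => g h -
        (1 + (11 - 11 * (n : ℝ) ^ 2) * h ^ 2 + (-88 + 88 * (n : ℝ) ^ 2) * h ^ 3
          + (11891 / 12 - 1137 * (n : ℝ) ^ 2 + 1753 / 12 * (n : ℝ) ^ 4) * h ^ 4
          + (-12826 + 47036 / 3 * (n : ℝ) ^ 2 - 8558 / 3 * (n : ℝ) ^ 4) * h ^ 5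
          + (69672971 / 360 - 991683 / 4 * (n : ℝ) ^ 2 + 224545 / 4 * (n : ℝ) ^ 4
            - 630551 / 360 * (n : ℝ) ^ 6) * h ^ 6))
        =O[nhds (0 : ℝ)] (fun h => h ^ 7) := by
  obtain ⟨N, rfl⟩ : ∃ N : ℕ, n = N := ⟨n.toNat, by lia⟩
  have hnum : HasMaclaurinSeries
      (fun h => ∑ j ∈ range N, cableTerm 11 2 (2 * j - (N - 1)) (Real.exp (h / 4)))
      (∑ j ∈ range N, cableTermSeries 11 2 (2 * j - (N - 1))) :=
    .sum fun j _ => hasMaclaurinSeries_cableTerm 11 2 (2 * j - (N - 1))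
  obtain ⟨g, hg, hgJ, hgO⟩ := hnum.exists_analyticAt_eq_div_isBigO_sub_trunc (m := 1) (d := 7)
    (hasMaclaurinSeries_cableDenominator 11 2 N)
    (order_bracketSeries _ (by norm_cast; lia)) (X_pow_eight_dvd_sum_cableTermSeries_sub N)
  refine ⟨g, hg, ?_, ?_⟩
  · filter_upwards [hgJ, self_mem_nhdsWithin] with h hgh hh
    rw [hgh, JCable, JtildeCable_div_JtildeU (Real.exp_pos _)
      (by simpa using hh), Int.toNat_natCast]
  · refine hgO.congr_left fun h => ?_
    simp [Polynomial.eval, eval₂_trunc_eq_sum_range, sum_range_succ, cableCoeff]
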